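/- Let c > 0 be a real number, let n be a positive even integer, and let ψ be the n-th PSWF with band limit c, with ODE eigenvalue χ_n. For integers k ≥ 1, set a_k = ∫_{-1}^{1} ψ(t)·P̄_{2k−2}(t) dt, c_k = (2k·(2k−1))/((4k−1)·√((4k−3)·(4k+1))) · c², and b_k = 2·(k−1)·(2k−1) + ((2·(2k−1)·(2k−2) − 1)/((4k−1)·(4k−5)))·c² − χ_n. Then c₁·a₂ + b₁·a₁ = 0; c_{k+1}·a_{k+2} + b_{k+1}·a_{k+1} + c_k·a_k = 0 for every k ≥ 1; and ∑_{k=1}^{∞} a_k² = 1. -/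

import Mathlib

open Real

/-- `IsPSWF c n ψ χ lam` : `ψ` is the `n`-th prolate spheroidal wave function with
band limit `c`, ODE eigenvalue `χ` and integral eigenvalue `lam`. -/
def IsPSWF (c : ℝ) (n : ℕ) (ψ : ℝ → ℝ) (χ : ℝ) (lam : ℂ) : Prop :=
  ContinuousOn ψ (Set.Icc (-1) 1) ∧
  (∀ x ∈ Set.Ioo (-1 : ℝ) 1, DifferentiableAt ℝ ψ x ∧ DifferentiableAt ℝ (deriv ψ) x) ∧
  (∀ x ∈ Set.Ioo (-1 : ℝ) 1,
    (1 - x ^ 2) * deriv (deriv ψ) x - 2 * x * deriv ψ x + (χ - c ^ 2 * x ^ 2) * ψ x = 0) ∧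
  {x | x ∈ Set.Ioo (-1 : ℝ) 1 ∧ ψ x = 0}.Finite ∧
  {x | x ∈ Set.Ioo (-1 : ℝ) 1 ∧ ψ x = 0}.ncard = n ∧
  (∫ t in (-1 : ℝ)..1, (ψ t) ^ 2) = 1 ∧
  ∀ x ∈ Set.Icc (-1 : ℝ) 1,
    lam * (ψ x : ℂ) =
      ∫ t in (-1 : ℝ)..1, (ψ t : ℂ) * Complex.exp (Complex.I * (c : ℂ) * (x : ℂ) * (t : ℂ))

/-- The Legendre polynomials, as functions `ℝ → ℝ`. -/
noncomputable def legendreP : ℕ → ℝ → ℝ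
  | 0, _ => 1
  | 1, t => t
  | (m + 2), t =>
      ((2 * (m : ℝ) + 3) * t * legendreP (m + 1) t - ((m : ℝ) + 1) * legendreP m t) /
        ((m : ℝ) + 2)

/-- The normalized Legendre polynomials `P̄_m = √(m + 1/2)·P_m`. -/
noncomputable def legendreBar (m : ℕ) (t : ℝ) : ℝ :=
  Real.sqrt ((m : ℝ) + 1 / 2) * legendreP m t

/-!
The flux `(1 - x²) ψ'` of a solution of `((1 - x²) ψ')' = (c² x² - χ) ψ` that is continuous on
`[-1, 1]` has a bounded derivative, hence a limit at each endpoint; a nonzero limit would make `ψ'`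
non-integrable there, so the limit is `0`. Green's identity therefore has no boundary terms.

Applied to `ψ` and `P̄_m` it says that the Legendre coefficients of `(c² x² - χ) ψ` are those of `ψ`
multiplied by `-m (m + 1)`; since multiplication by `x` acts on the coefficients through a Jacobi
matrix, whose square couples `m` only to `m` and `m ± 2`, this is the three-term recurrence.

Applied on `[0, 1]` to `ψ` and its reflection it shows that their Wronskian vanishes at `0`, so `ψ`
is even or odd. An odd function has an odd number of zeros, so for even `n` the odd coefficients
vanish and Parseval's identity involves the even ones only.
-/

open Filter MeasureTheory Polynomial Set Topology

section Parseval

variable {K : Set ℝ} [CompactSpace K] {μ : Measure K} [IsFiniteMeasure μ]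
  {S : Polynomial.Sequence ℝ}

theorem closure_span_toLp_sequence_eq_top :
    (Submodule.span ℝ (range fun m =>
      ContinuousMap.toLp (E := ℝ) 2 μ ℝ ((S m).toContinuousMapOn K))).topologicalClosure = ⊤ := by
  have hspan : Submodule.span ℝ (range fun m => (S m).toContinuousMapOn K) =
      Subalgebra.toSubmodule (polynomialFunctions K) := by
    have hS := S.span fun i => (leadingCoeff_ne_zero.2 (S.ne_zero i)).isUnit
    have := congrArg (Submodule.map (toContinuousMapOnAlgHom K).toLinearMap) hS
    rw [Submodule.map_span, ← range_comp] at this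
    exact this
  have hdense : (Submodule.span ℝ (range fun m =>
      (S m).toContinuousMapOn K)).topologicalClosure = ⊤ := by
    rw [hspan]
    exact congrArg Subalgebra.toSubmodule (polynomialFunctions.topologicalClosure K)
  rw [← (ContinuousMap.toLp_denseRange ℝ μ ℝ
    (by simp : (2 : ENNReal) ≠ ⊤)).topologicalClosure_map_submodule hdense, Submodule.map_span,
    ← range_comp]
  rfl

theorem hasSum_sq_integral_mul_sequence
    (hS : ∀ m n, ∫ t, (S m).eval (t : ℝ) * (S n).eval (t : ℝ) ∂μ = if m = n then 1 else 0)
    (f : C(K, ℝ)) :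
    HasSum (fun m => (∫ t, f t * (S m).eval (t : ℝ) ∂μ) ^ 2) (∫ t, f t ^ 2 ∂μ) := by
  have horth : Orthonormal ℝ fun m =>
      ContinuousMap.toLp (E := ℝ) 2 μ ℝ ((S m).toContinuousMapOn K) := by
    simp [orthonormal_iff_ite, ContinuousMap.inner_toLp, ← hS, mul_comm]
  have hsum := (HilbertBasis.mk horth closure_span_toLp_sequence_eq_top.ge).hasSum_inner_mul_inner
      (ContinuousMap.toLp 2 μ ℝ f) (ContinuousMap.toLp 2 μ ℝ f)
  simp only [HilbertBasis.coe_mk, ContinuousMap.inner_toLp, conj_trivial] at hsum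
  simpa [sq, mul_comm (eval _ _)] using hsum

theorem hasSum_sq_intervalIntegral_mul_sequence {a b : ℝ} (hab : a ≤ b)
    (hS : ∀ m n, ∫ t in a..b, (S m).eval t * (S n).eval t = if m = n then 1 else 0)
    {f : ℝ → ℝ} (hf : ContinuousOn f (Icc a b)) :
    HasSum (fun m => (∫ t in a..b, f t * (S m).eval t) ^ 2) (∫ t in a..b, f t ^ 2) := by
  have : IsFiniteMeasure (volume.comap (Subtype.val : Icc a b → ℝ)) :=
    ⟨by simp only [comap_subtype_coe_apply measurableSet_Icc, image_univ, Subtype.range_coe,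
      measure_Icc_lt_top]⟩
  have hintegral (g : ℝ → ℝ) :
      ∫ t in a..b, g t = ∫ t : Icc a b, g t ∂volume.comap Subtype.val := by
    rw [integral_subtype_comap measurableSet_Icc, integral_Icc_eq_integral_Ioc,
      intervalIntegral.integral_of_le hab]
  simp only [hintegral] at hS ⊢
  exact hasSum_sq_integral_mul_sequence hS ⟨_, hf.domRestrict⟩

end Parseval

theorem odd_ncard_of_neg_mem {G : Type*} [AddGroup G] [IsAddTorsionFree G] {Z : Set G}
    (hZ : Z.Finite) (h0 : 0 ∈ Z) (hneg : ∀ x ∈ Z, -x ∈ Z) : Odd Z.ncard := by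
  classical
  have := hZ.fintype
  let ν : Function.End Z := fun x => ⟨-x, hneg x x.2⟩
  have hν : ν ^ 2 ^ 1 = 1 := funext fun x => Subtype.ext (neg_neg (x : G))
  have hfix : Function.fixedPoints ν = {⟨0, h0⟩} := by
    ext ⟨x, hx⟩
    simp [Function.mem_fixedPoints, Function.IsFixedPt, ν, neg_eq_self]
  have hcard := Equiv.Perm.card_fixedPoints_modEq (p := 2) hν
  simp only [hfix, Fintype.card_unique] at hcard
  rwa [Nat.odd_iff, ← Nat.card_coe_set_eq, Nat.card_eq_fintype_card]

theorem exists_deriv_mul_sub_lt {f : ℝ → ℝ} {a b κ : ℝ} (hab : a < b) (hκ : 0 < κ)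
    (hf : ContinuousOn f (Icc a b)) (hf' : DifferentiableOn ℝ f (Ioo a b)) :
    ∃ x ∈ Ioo a b, deriv f x * (b - x) < κ := by
  by_contra! hle
  have hlower : ∀ x ∈ Ioo a b, ‖(x - b)⁻¹‖ ≤ κ⁻¹ * deriv f x := by
    intro x hx
    have hbx : 0 < b - x := sub_pos.2 hx.2
    rw [norm_inv, norm_eq_abs, abs_sub_comm, abs_of_pos hbx, inv_le_iff_one_le_mul₀ hbx, mul_assoc,
      ← div_eq_inv_mul, one_le_div hκ]
    exact hle x hx
  have hderiv : IntegrableOn (deriv f) (Ioo a b) := by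
    refine (intervalIntegral.integrableOn_deriv_of_nonneg hf
      (fun x hx => (hf'.differentiableAt (Ioo_mem_nhds hx.1 hx.2)).hasDerivAt)
      fun x hx => ?_).mono_set Ioo_subset_Ioc_self
    exact nonneg_of_mul_nonneg_left (hκ.le.trans (hle x hx)) (sub_pos.2 hx.2)
  have hinv : IntegrableOn (fun x => (x - b)⁻¹) (Ioo a b) :=
    (hderiv.const_mul κ⁻¹).mono' (by fun_prop)
      ((ae_restrict_iff' measurableSet_Ioo).2 (.of_forall hlower))
  rw [← intervalIntegrable_iff_integrableOn_Ioo_of_le hab.le,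
    intervalIntegrable_sub_inv_iff] at hinv
  exact hinv.elim hab.ne (· right_mem_uIcc)

theorem exists_tendsto_nhdsLT_of_norm_deriv_le {g g' : ℝ → ℝ} {a b C : ℝ} (hab : a < b)
    (hg : ∀ x ∈ Ioo a b, HasDerivAt g (g' x) x) (hC : ∀ x ∈ Ioo a b, ‖g' x‖ ≤ C) :
    ∃ L, Tendsto g (𝓝[<] b) (𝓝 L) := by
  have hlip : LipschitzOnWith C.toNNReal g (Ioo a b) :=
    (convex_Ioo a b).lipschitzOnWith_of_nnnorm_hasDerivWithin_le
      (fun x hx => (hg x hx).hasDerivWithinAt)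
      fun x hx => NNReal.le_toNNReal_of_coe_le (hC x hx)
  obtain ⟨G, hG, hgG⟩ := hlip.extend_real
  refine ⟨G b, (hG.continuous.continuousWithinAt (s := Iio b)).tendsto.congr' ?_⟩
  filter_upwards [Ioo_mem_nhdsLT hab] with x hx using (hgG hx).symm

theorem neg_mem_Ioo_neg_self {a x : ℝ} (hx : x ∈ Ioo (-a) a) : -x ∈ Ioo (-a) a := by
  simpa [and_comm, neg_lt] using hx

theorem lipschitzWith_mul_snd_mul_fst (α β : ℝ) :
    LipschitzWith (max ‖α‖₊ ‖β‖₊) fun p : ℝ × ℝ => (α * p.2, β * p.1) := by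
  simpa using ((lipschitzWith_smul (β := ℝ) α).comp LipschitzWith.prod_snd).prodMk
    ((lipschitzWith_smul (β := ℝ) β).comp LipschitzWith.prod_fst)

/-! ### Regular solutions of Legendre-type equations -/

/-- The quantity `(1 - x²) f'(x)` whose derivative is the Legendre differential expression. As
`deriv` is total, its value at `±1` is `0` for every `f`, so only its continuity there says that
`(1 - x²) f'(x)` tends to `0`. -/
noncomputable def legendreFlux (f : ℝ → ℝ) (x : ℝ) : ℝ := (1 - x ^ 2) * deriv f x

/-- `f` is a solution on `(-1, 1)`, continuous up to the endpoints, of `((1 - x²) f')' = r f`,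
where `r` is continuous on `[-1, 1]`. -/
structure IsRegularSolution (r f : ℝ → ℝ) : Prop where
  continuousOn_coeff : ContinuousOn r (Icc (-1) 1)
  continuousOn : ContinuousOn f (Icc (-1) 1)
  differentiableAt : ∀ x ∈ Ioo (-1 : ℝ) 1, DifferentiableAt ℝ f x
  hasDerivAt_flux : ∀ x ∈ Ioo (-1 : ℝ) 1, HasDerivAt (legendreFlux f) (r x * f x) x

theorem legendreFlux_neg (f : ℝ → ℝ) : legendreFlux (-f) = -legendreFlux f := by
  ext x
  simp [legendreFlux, deriv.neg]

theorem legendreFlux_comp_neg (f : ℝ → ℝ) (x : ℝ) :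
    legendreFlux (fun y => f (-y)) x = -legendreFlux f (-x) := by
  simp [legendreFlux, deriv_comp_neg]

namespace IsRegularSolution

variable {r s f u : ℝ → ℝ}

theorem neg (hf : IsRegularSolution r f) : IsRegularSolution r (-f) where
  continuousOn_coeff := hf.continuousOn_coeff
  continuousOn := hf.continuousOn.neg
  differentiableAt x hx := (hf.differentiableAt x hx).neg
  hasDerivAt_flux x hx := by
    rw [legendreFlux_neg, Pi.neg_apply, mul_neg]
    exact (hf.hasDerivAt_flux x hx).neg

theorem comp_neg (hf : IsRegularSolution r f) :
    IsRegularSolution (fun x => r (-x)) fun x => f (-x) := by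
  have hIcc : MapsTo Neg.neg (Icc (-1 : ℝ) 1) (Icc (-1) 1) := fun x hx => by
    simpa [and_comm, neg_le] using hx
  refine ⟨hf.continuousOn_coeff.comp continuousOn_neg hIcc,
    hf.continuousOn.comp continuousOn_neg hIcc,
    fun x hx => (hf.differentiableAt _ (neg_mem_Ioo_neg_self hx)).comp x differentiableAt_id.neg,
    fun x hx => ?_⟩
  rw [funext (legendreFlux_comp_neg f)]
  have hflux := (hf.hasDerivAt_flux _ (neg_mem_Ioo_neg_self hx)).comp x (hasDerivAt_neg x)
  exact hflux.neg.congr_deriv (by ring)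

-- A limit `L > 0` would give `f' ≥ L / (4 (1 - x))` near `1`, which is not integrable.
theorem flux_limit_nonpos (hf : IsRegularSolution r f) {L : ℝ}
    (hL : Tendsto (legendreFlux f) (𝓝[<] 1) (𝓝 L)) : L ≤ 0 := by
  by_contra! hpos
  obtain ⟨a, ha, hlarge⟩ :=
    (mem_nhdsLT_iff_exists_mem_Ico_Ioo_subset (by norm_num : (-1 : ℝ) < 1)).1
      (hL.eventually (lt_mem_nhds (half_lt_self hpos)))
  obtain ⟨x, hx, hsmall⟩ := exists_deriv_mul_sub_lt ha.2 (by positivity : 0 < L / 4)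
    (hf.continuousOn.mono (Icc_subset_Icc_left ha.1)) fun y hy =>
      (hf.differentiableAt y ⟨ha.1.trans_lt hy.1, hy.2⟩).differentiableWithinAt
  have hflux : L / 2 < (1 + x) * (deriv f x * (1 - x)) :=
    (hlarge hx).trans_eq (by rw [legendreFlux]; ring)
  nlinarith [hx.1, hx.2, ha.1]

theorem tendsto_flux_one (hf : IsRegularSolution r f) :
    Tendsto (legendreFlux f) (𝓝[<] 1) (𝓝 0) := by
  obtain ⟨C, hC⟩ :=
    isCompact_Icc.exists_bound_of_continuousOn (hf.continuousOn_coeff.mul hf.continuousOn)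
  obtain ⟨L, hL⟩ := exists_tendsto_nhdsLT_of_norm_deriv_le (by norm_num) hf.hasDerivAt_flux
    fun x hx => hC x (Ioo_subset_Icc_self hx)
  have hneg : -L ≤ 0 := hf.neg.flux_limit_nonpos (by rw [legendreFlux_neg]; exact hL.neg)
  rwa [le_antisymm (hf.flux_limit_nonpos hL) (neg_nonpos.1 hneg)] at hL

theorem tendsto_flux_neg_one (hf : IsRegularSolution r f) :
    Tendsto (legendreFlux f) (𝓝[>] (-1)) (𝓝 0) := by
  have hreflect := hf.comp_neg.tendsto_flux_one.neg.comp (tendsto_neg_nhdsGT_neg (a := (1 : ℝ)))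
  simpa [Function.comp_def, legendreFlux_comp_neg] using hreflect

theorem continuousOn_flux (hf : IsRegularSolution r f) :
    ContinuousOn (legendreFlux f) (Icc (-1) 1) := by
  intro x hx
  rcases hx.1.eq_or_lt with rfl | hx₁
  · rw [continuousWithinAt_Icc_iff_Ici (by norm_num), ← continuousWithinAt_Ioi_iff_Ici]
    simpa [ContinuousWithinAt, legendreFlux] using hf.tendsto_flux_neg_one
  rcases hx.2.eq_or_lt with rfl | hx₂
  · rw [continuousWithinAt_Icc_iff_Iic (by norm_num), ← continuousWithinAt_Iio_iff_Iic]
    simpa [ContinuousWithinAt, legendreFlux] using hf.tendsto_flux_one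
  exact (hf.hasDerivAt_flux x ⟨hx₁, hx₂⟩).continuousAt.continuousWithinAt

theorem integral_sub_mul_mul (hf : IsRegularSolution r f) (hu : IsRegularSolution s u) {a : ℝ}
    (ha : a ∈ Icc (-1 : ℝ) 1) :
    ∫ t in a..1, (r t - s t) * (f t * u t) = f a * legendreFlux u a - legendreFlux f a * u a := by
  have hsub : Icc a 1 ⊆ Icc (-1 : ℝ) 1 := Icc_subset_Icc_left ha.1
  have hderiv : ∀ x ∈ Ioo a 1,
      HasDerivAt (fun y => legendreFlux f y * u y - f y * legendreFlux u y)
        ((r x - s x) * (f x * u x)) x := by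
    intro x hx
    have hx' : x ∈ Ioo (-1 : ℝ) 1 := Ioo_subset_Ioo_left ha.1 hx
    refine (((hf.hasDerivAt_flux x hx').mul (hu.differentiableAt x hx').hasDerivAt).sub
      ((hf.differentiableAt x hx').hasDerivAt.mul (hu.hasDerivAt_flux x hx'))).congr_deriv ?_
    simp only [legendreFlux]
    ring
  rw [intervalIntegral.integral_eq_sub_of_hasDerivAt_of_le ha.2
    (((hf.continuousOn_flux.mul hu.continuousOn).sub
      (hf.continuousOn.mul hu.continuousOn_flux)).mono hsub) hderiv
    ((((hf.continuousOn_coeff.sub hu.continuousOn_coeff).mul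
      (hf.continuousOn.mul hu.continuousOn)).mono hsub).intervalIntegrable_of_Icc ha.2)]
  simp [legendreFlux]

theorem integral_sub_mul_mul_eq_zero (hf : IsRegularSolution r f) (hu : IsRegularSolution s u) :
    ∫ t in (-1 : ℝ)..1, (r t - s t) * (f t * u t) = 0 := by
  simpa [legendreFlux] using hf.integral_sub_mul_mul hu (a := -1) (by simp)

theorem wronskian_eq_zero (hf : IsRegularSolution r f) (hu : IsRegularSolution r u) {x : ℝ}
    (hx : x ∈ Icc (-1 : ℝ) 1) : f x * legendreFlux u x = legendreFlux f x * u x := by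
  simpa [sub_eq_zero, eq_comm] using hf.integral_sub_mul_mul hu hx

theorem eqOn_of_eq (hf : IsRegularSolution r f) (hu : IsRegularSolution r u) {x₀ : ℝ}
    (hx₀ : x₀ ∈ Ioo (-1 : ℝ) 1) (heq : f x₀ = u x₀)
    (hflux : legendreFlux f x₀ = legendreFlux u x₀) : EqOn f u (Ioo (-1) 1) := by
  intro x hx
  obtain ⟨b, hb, hb₁⟩ := exists_between (max_lt (abs_lt.2 hx₀) (abs_lt.2 hx))
  have hpos : ∀ t ∈ Ioo (-1 : ℝ) 1, 1 - t ^ 2 ≠ 0 := fun t ht => by nlinarith [ht.1, ht.2]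
  have hIcc : Icc (-b) b ⊆ Ioo (-1) 1 := Icc_subset_Ioo (neg_lt_neg hb₁) hb₁
  have hcoeff : ContinuousOn (fun t => ((1 - t ^ 2)⁻¹, r t)) (Icc (-b) b) :=
    (ContinuousOn.inv₀ (by fun_prop) fun t ht => hpos t (hIcc ht)).prodMk
      (hf.continuousOn_coeff.mono (hIcc.trans Ioo_subset_Icc_self))
  obtain ⟨C, hC⟩ := isCompact_Icc.exists_bound_of_continuousOn hcoeff
  have hode {w : ℝ → ℝ} (hw : IsRegularSolution r w) : ∀ t ∈ Ioo (-b) b,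
      HasDerivAt (fun y => (w y, legendreFlux w y))
        ((1 - t ^ 2)⁻¹ * legendreFlux w t, r t * w t) t ∧
      (w t, legendreFlux w t) ∈ (univ : Set (ℝ × ℝ)) := fun t ht => by
    have ht' := hIcc (Ioo_subset_Icc_self ht)
    rw [legendreFlux, inv_mul_cancel_left₀ (hpos t ht')]
    exact ⟨(hw.differentiableAt t ht').hasDerivAt.prodMk (hw.hasDerivAt_flux t ht'), mem_univ _⟩
  have hunique := ODE_solution_unique_of_mem_Ioo (K := C.toNNReal)
    (v := fun t p => ((1 - t ^ 2)⁻¹ * p.2, r t * p.1))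
    (fun t ht => ((lipschitzWith_mul_snd_mul_fst _ _).weaken
      (NNReal.le_toNNReal_of_coe_le (hC t (Ioo_subset_Icc_self ht)))).lipschitzOnWith)
    (abs_lt.1 ((le_max_left _ _).trans_lt hb)) (hode hf) (hode hu) (Prod.ext heq hflux)
  exact congrArg Prod.fst (hunique (abs_lt.1 ((le_max_right _ _).trans_lt hb)))

theorem eq_comp_neg_of_even_ncard (hf : IsRegularSolution r f) (hr : ∀ x, r (-x) = r x)
    (hfin : {x | x ∈ Ioo (-1 : ℝ) 1 ∧ f x = 0}.Finite)
    (heven : Even {x | x ∈ Ioo (-1 : ℝ) 1 ∧ f x = 0}.ncard) :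
    ∀ x ∈ Ioo (-1 : ℝ) 1, f (-x) = f x := by
  have hreflect : IsRegularSolution r fun x => f (-x) := by simpa only [hr] using hf.comp_neg
  have h0 : (0 : ℝ) ∈ Ioo (-1) 1 := by norm_num
  have hwronskian : f 0 = 0 ∨ legendreFlux f 0 = 0 := by
    have := hf.wronskian_eq_zero hreflect (Ioo_subset_Icc_self h0)
    rw [legendreFlux_comp_neg, neg_zero] at this
    exact mul_eq_zero.1 (by linarith)
  rcases hwronskian with hf0 | hflux0
  · have hodd : EqOn (fun x => f (-x)) (-f) (Ioo (-1) 1) :=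
      hreflect.eqOn_of_eq hf.neg h0 (by simp [hf0]) (by
        simp [legendreFlux_comp_neg, legendreFlux_neg])
    refine absurd heven (Nat.not_even_iff_odd.2 (odd_ncard_of_neg_mem hfin ⟨h0, hf0⟩ ?_))
    rintro x ⟨hx, hfx⟩
    exact ⟨neg_mem_Ioo_neg_self hx, by simpa [hfx] using hodd hx⟩
  · exact hreflect.eqOn_of_eq hf h0 (by simp) (by simp [legendreFlux_comp_neg, hflux0])

end IsRegularSolution

/-! ### Legendre polynomials -/

/-- The `m`-th Legendre polynomial as an element of `ℝ[X]`; its evaluation is `legendreP m`. -/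
noncomputable def legendrePolynomial : ℕ → ℝ[X]
  | 0 => 1
  | 1 => X
  | m + 2 => C ((m : ℝ) + 2)⁻¹ * (C (2 * (m : ℝ) + 3) * (X * legendrePolynomial (m + 1)) -
      C ((m : ℝ) + 1) * legendrePolynomial m)

theorem eval_legendrePolynomial (m : ℕ) (t : ℝ) :
    (legendrePolynomial m).eval t = legendreP m t := by
  induction m using Nat.twoStepInduction with
  | zero => simp [legendrePolynomial, legendreP]
  | one => simp [legendrePolynomial, legendreP]
  | more m hm hm' =>
    simp only [legendrePolynomial, legendreP, eval_mul, eval_sub, eval_C, eval_X, hm, hm']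
    ring

theorem degree_legendrePolynomial (m : ℕ) : (legendrePolynomial m).degree = m := by
  induction m using Nat.twoStepInduction with
  | zero => simp [legendrePolynomial]
  | one => simp [legendrePolynomial]
  | more m hm hm' =>
    have hlead : (C (2 * (m : ℝ) + 3) * (X * legendrePolynomial (m + 1))).degree =
        ((m + 2 : ℕ) : WithBot ℕ) := by
      rw [degree_C_mul (by positivity), degree_mul, degree_X, hm', ← Nat.cast_one,
        ← Nat.cast_add, Nat.add_comm 1]
    have hlow : (C ((m : ℝ) + 1) * legendrePolynomial m).degree < ((m + 2 : ℕ) : WithBot ℕ) := by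
      rw [degree_C_mul (by positivity), hm]
      exact Nat.cast_lt.2 (by lia)
    rw [legendrePolynomial, degree_C_mul (by positivity),
      degree_sub_eq_left_of_degree_lt (hlow.trans_eq hlead.symm), hlead]

theorem legendrePolynomial_recurrence (m : ℕ) :
    ((m : ℝ[X]) + 2) * legendrePolynomial (m + 2) =
      (2 * (m : ℝ[X]) + 3) * (X * legendrePolynomial (m + 1)) -
        ((m : ℝ[X]) + 1) * legendrePolynomial m := by
  have hcancel : ((m : ℝ[X]) + 2) * C ((m : ℝ) + 2)⁻¹ = 1 := by
    have : (m : ℝ) + 2 ≠ 0 := by positivity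
    rw [← C_eq_natCast, ← C_ofNat, ← C_add, ← C_mul, mul_inv_cancel₀ this, C_1]
  rw [legendrePolynomial, ← mul_assoc, hcancel]
  simp [map_ofNat]

theorem derivative_legendrePolynomial_succ (m : ℕ) :
    derivative (legendrePolynomial (m + 1)) =
        X * derivative (legendrePolynomial m) + ((m : ℝ[X]) + 1) * legendrePolynomial m ∧
      X * derivative (legendrePolynomial (m + 1)) - derivative (legendrePolynomial m) =
        ((m : ℝ[X]) + 1) * legendrePolynomial (m + 1) := by
  induction m with
  | zero => simp [legendrePolynomial]
  | succ m ih =>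
    obtain ⟨hup, hdown⟩ := ih
    have hrec := legendrePolynomial_recurrence m
    have hrec' := congrArg derivative hrec
    simp only [derivative_mul, derivative_sub, derivative_add, derivative_natCast,
      derivative_ofNat, derivative_one, derivative_X] at hrec'
    have hm : (m : ℝ[X]) + 2 ≠ 0 := by norm_cast
    have hup' : derivative (legendrePolynomial (m + 2)) =
        X * derivative (legendrePolynomial (m + 1)) +
          ((m : ℝ[X]) + 2) * legendrePolynomial (m + 1) :=
      mul_left_cancel₀ hm (by linear_combination hrec' + ((m : ℝ[X]) + 1) * hdown)
    push_cast
    exact ⟨by linear_combination hup', by linear_combination X * hup' - hup + X * hdown - hrec⟩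

theorem derivative_one_sub_sq_mul_derivative_legendrePolynomial (m : ℕ) :
    derivative ((1 - X ^ 2) * derivative (legendrePolynomial m)) =
      -((m : ℝ[X]) * ((m : ℝ[X]) + 1)) * legendrePolynomial m := by
  cases m with
  | zero => simp [legendrePolynomial]
  | succ m =>
    obtain ⟨hup, hdown⟩ := derivative_legendrePolynomial_succ m
    have hflux : (1 - X ^ 2) * derivative (legendrePolynomial (m + 1)) =
        ((m : ℝ[X]) + 1) * (legendrePolynomial m - X * legendrePolynomial (m + 1)) := by
      linear_combination hup - X * hdown
    rw [hflux]
    simp only [derivative_mul, derivative_sub, derivative_add, derivative_natCast,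
      derivative_one, derivative_X]
    push_cast
    linear_combination -((m : ℝ[X]) + 1) * hdown

theorem isRegularSolution_eval {p : ℝ[X]} {μ : ℝ}
    (hp : derivative ((1 - X ^ 2) * derivative p) = C μ * p) :
    IsRegularSolution (fun _ => μ) fun t => p.eval t where
  continuousOn_coeff := continuousOn_const
  continuousOn := p.continuousOn
  differentiableAt _ _ := p.differentiableAt
  hasDerivAt_flux x _ := by
    have hflux : legendreFlux (fun t => p.eval t) =
        fun t => ((1 - X ^ 2) * derivative p).eval t := by
      ext t
      simp [legendreFlux]
    rw [hflux]
    exact (((1 - X ^ 2) * derivative p).hasDerivAt x).congr_deriv (by simp [hp])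

/-! ### Normalized Legendre polynomials and their Jacobi matrix -/

/-- The factor `√(m + 1/2)` by which `legendreP m` is scaled to have norm `1` in `L²(-1, 1)`. -/
noncomputable def legendreScale (m : ℕ) : ℝ := √((m : ℝ) + 1 / 2)

theorem legendreScale_pos (m : ℕ) : 0 < legendreScale m := by
  unfold legendreScale
  positivity

theorem legendreScale_sq (m : ℕ) : legendreScale m ^ 2 = m + 1 / 2 := Real.sq_sqrt (by positivity)

theorem legendreBar_eq_legendreScale_mul (m : ℕ) (t : ℝ) :
    legendreBar m t = legendreScale m * legendreP m t := rfl

/-- The normalized Legendre polynomials `legendreBar` as a sequence of polynomials, one in each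
degree. -/
noncomputable def normalizedLegendre : Polynomial.Sequence ℝ where
  elems' m := C (legendreScale m) * legendrePolynomial m
  degree_eq' m := by rw [degree_C_mul (legendreScale_pos m).ne', degree_legendrePolynomial]

theorem eval_normalizedLegendre (m : ℕ) (t : ℝ) :
    (normalizedLegendre m).eval t = legendreBar m t := by
  change (C _ * legendrePolynomial m).eval t = _
  rw [eval_mul, eval_C, eval_legendrePolynomial, legendreBar_eq_legendreScale_mul]

theorem continuous_legendreBar (m : ℕ) : Continuous (legendreBar m) := by
  simpa only [eval_normalizedLegendre] using (normalizedLegendre m).continuous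

theorem isRegularSolution_legendreBar (m : ℕ) :
    IsRegularSolution (fun _ => -((m : ℝ) * (m + 1))) (legendreBar m) := by
  have hode : derivative ((1 - X ^ 2) * derivative (normalizedLegendre m)) =
      C (-((m : ℝ) * (m + 1))) * normalizedLegendre m := by
    change derivative ((1 - X ^ 2) * derivative (C _ * legendrePolynomial m)) =
      _ * (C _ * legendrePolynomial m)
    rw [derivative_C_mul, mul_left_comm, derivative_C_mul,
      derivative_one_sub_sq_mul_derivative_legendrePolynomial]
    simp only [map_neg, map_mul, map_natCast, map_add, map_one]
    ring
  simpa only [eval_normalizedLegendre] using isRegularSolution_eval hode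

theorem legendreBar_neg (m : ℕ) (t : ℝ) : legendreBar m (-t) = (-1) ^ m * legendreBar m t := by
  have hP : legendreP m (-t) = (-1) ^ m * legendreP m t := by
    induction m using Nat.twoStepInduction with
    | zero => simp [legendreP]
    | one => simp [legendreP]
    | more m hm hm' =>
      rw [legendreP, hm, hm', legendreP]
      ring
  rw [legendreBar, legendreBar, hP, mul_left_comm]

/-- The off-diagonal entry `m / √(4m² - 1)` of the Jacobi matrix of the normalized Legendre
polynomials, i.e. the coefficient of `P̄_m` in `t P̄_{m-1}`. At `m = 0` it is `0`. -/
noncomputable def legendreJacobi (m : ℕ) : ℝ := m / √(4 * (m : ℝ) ^ 2 - 1)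

theorem legendreJacobi_zero : legendreJacobi 0 = 0 := by simp [legendreJacobi]

theorem sqrt_eq_two_mul_legendreScale_mul {x : ℝ} {m n : ℕ}
    (hx : x = (2 * (m : ℝ) + 1) * (2 * n + 1)) :
    √x = 2 * legendreScale m * legendreScale n := by
  have hpos : 0 < 2 * legendreScale m * legendreScale n :=
    mul_pos (mul_pos two_pos (legendreScale_pos m)) (legendreScale_pos n)
  rw [Real.sqrt_eq_iff_mul_self_eq_of_pos hpos, ← sq, mul_pow, mul_pow, legendreScale_sq,
    legendreScale_sq, hx]
  ring

theorem legendreJacobi_succ (m : ℕ) :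
    legendreJacobi (m + 1) =
      ((m : ℝ) + 1) / (2 * legendreScale m * legendreScale (m + 1)) := by
  rw [legendreJacobi, sqrt_eq_two_mul_legendreScale_mul (m := m) (n := m + 1) (by push_cast; ring),
    Nat.cast_add_one]

theorem legendreJacobi_succ_pos (m : ℕ) : 0 < legendreJacobi (m + 1) := by
  have := legendreScale_pos m
  have := legendreScale_pos (m + 1)
  rw [legendreJacobi_succ]
  positivity

theorem legendreJacobi_mul_legendreJacobi_succ (m : ℕ) :
    legendreJacobi (m + 1) * legendreJacobi (m + 2) =
      ((m : ℝ) + 1) * (m + 2) / ((2 * m + 3) * √((2 * (m : ℝ) + 1) * (2 * m + 5))) := by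
  have hsq := legendreScale_sq (m + 1)
  have := legendreScale_pos m
  have := legendreScale_pos (m + 1)
  have := legendreScale_pos (m + 2)
  rw [legendreJacobi_succ, legendreJacobi_succ,
    sqrt_eq_two_mul_legendreScale_mul (m := m) (n := m + 2) (by push_cast; ring)]
  push_cast at hsq ⊢
  field_simp
  rw [hsq]
  ring

theorem legendreJacobi_sq (m : ℕ) :
    legendreJacobi m ^ 2 = (m : ℝ) ^ 2 / ((2 * m - 1) * (2 * m + 1)) := by
  rcases m with _ | m
  · simp [legendreJacobi]
  · rw [legendreJacobi, div_pow, Real.sq_sqrt (by push_cast; nlinarith [m.cast_nonneg (α := ℝ)])]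
    ring_nf

theorem legendreJacobi_sq_add_sq_succ (m : ℕ) :
    legendreJacobi m ^ 2 + legendreJacobi (m + 1) ^ 2 =
      (2 * m * (m + 1) - 1) / ((2 * m + 3) * (2 * (m : ℝ) - 1)) := by
  have hm : (m : ℝ) * 2 - 1 ≠ 0 := sub_ne_zero.2 (by norm_cast; lia)
  rw [legendreJacobi_sq, legendreJacobi_sq]
  push_cast
  rw [show 2 * ((m : ℝ) + 1) - 1 = 2 * m + 1 by ring,
    show 2 * ((m : ℝ) + 1) + 1 = 2 * m + 3 by ring]
  field_simp
  ring

theorem legendreP_recurrence (m : ℕ) (t : ℝ) :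
    (2 * (m : ℝ) + 1) * (t * legendreP m t) =
      ((m : ℝ) + 1) * legendreP (m + 1) t + m * legendreP (m - 1) t := by
  rcases m with _ | m
  · simp [legendreP]
  · simp only [legendreP, Nat.add_sub_cancel]
    push_cast
    field_simp
    ring

theorem legendreJacobi_succ_mul_legendreScale_succ (m : ℕ) :
    legendreJacobi (m + 1) * legendreScale (m + 1) = (m + 1) / (2 * m + 1) * legendreScale m := by
  have := legendreScale_pos m
  have := legendreScale_pos (m + 1)
  rw [legendreJacobi_succ]
  field_simp
  linear_combination -2 * legendreScale_sq m

theorem legendreJacobi_mul_legendreScale_pred (m : ℕ) :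
    legendreJacobi m * legendreScale (m - 1) = m / (2 * m + 1) * legendreScale m := by
  rcases m with _ | m
  · simp [legendreJacobi_zero]
  · have := legendreScale_pos m
    have := legendreScale_pos (m + 1)
    have hsq := legendreScale_sq (m + 1)
    rw [legendreJacobi_succ, Nat.add_sub_cancel]
    push_cast at hsq ⊢
    field_simp
    linear_combination -2 * hsq

theorem mul_legendreBar (m : ℕ) (t : ℝ) :
    t * legendreBar m t =
      legendreJacobi (m + 1) * legendreBar (m + 1) t +
        legendreJacobi m * legendreBar (m - 1) t := by
  have hrec := legendreP_recurrence m t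
  simp only [legendreBar_eq_legendreScale_mul]
  rw [← mul_assoc (legendreJacobi _), ← mul_assoc (legendreJacobi _),
    legendreJacobi_succ_mul_legendreScale_succ, legendreJacobi_mul_legendreScale_pred]
  field_simp
  linear_combination legendreScale m * hrec

/-! ### Legendre coefficients -/

/-- The coefficient of `P̄_m` in the Legendre expansion of `f` on `[-1, 1]`. -/
noncomputable def legendreCoeff (f : ℝ → ℝ) (m : ℕ) : ℝ :=
  ∫ t in (-1 : ℝ)..1, f t * legendreBar m t

theorem intervalIntegrable_mul_legendreBar {f : ℝ → ℝ} (hf : ContinuousOn f (Icc (-1) 1)) (m : ℕ) :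
    IntervalIntegrable (fun t => f t * legendreBar m t) volume (-1) 1 :=
  (hf.mul (continuous_legendreBar m).continuousOn).intervalIntegrable_of_Icc (by norm_num)

theorem legendreCoeff_const_mul (k : ℝ) (f : ℝ → ℝ) (m : ℕ) :
    legendreCoeff (fun t => k * f t) m = k * legendreCoeff f m := by
  simp only [legendreCoeff, mul_assoc, intervalIntegral.integral_const_mul]

theorem legendreCoeff_sub {f g : ℝ → ℝ} (hf : ContinuousOn f (Icc (-1) 1))
    (hg : ContinuousOn g (Icc (-1) 1)) (m : ℕ) :
    legendreCoeff (fun t => f t - g t) m = legendreCoeff f m - legendreCoeff g m := by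
  simp only [legendreCoeff, sub_mul]
  exact intervalIntegral.integral_sub (intervalIntegrable_mul_legendreBar hf m)
    (intervalIntegrable_mul_legendreBar hg m)

theorem legendreCoeff_id_mul {f : ℝ → ℝ} (hf : ContinuousOn f (Icc (-1) 1)) (m : ℕ) :
    legendreCoeff (fun t => t * f t) m =
      legendreJacobi (m + 1) * legendreCoeff f (m + 1) +
        legendreJacobi m * legendreCoeff f (m - 1) := by
  have hintegral := intervalIntegrable_mul_legendreBar hf
  simp only [legendreCoeff, ← intervalIntegral.integral_const_mul]
  rw [← intervalIntegral.integral_add ((hintegral _).const_mul _) ((hintegral _).const_mul _)]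
  congr 1 with t
  linear_combination f t * mul_legendreBar m t

theorem legendreCoeff_sq_mul {f : ℝ → ℝ} (hf : ContinuousOn f (Icc (-1) 1)) (m : ℕ) :
    legendreCoeff (fun t => t ^ 2 * f t) m =
      legendreJacobi (m + 1) * legendreJacobi (m + 2) * legendreCoeff f (m + 2) +
      (legendreJacobi m ^ 2 + legendreJacobi (m + 1) ^ 2) * legendreCoeff f m +
      legendreJacobi (m - 1) * legendreJacobi m * legendreCoeff f (m - 2) := by
  have htf : ContinuousOn (fun t => t * f t) (Icc (-1) 1) := continuousOn_id.mul hf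
  simp only [sq, mul_assoc]
  rw [legendreCoeff_id_mul htf, legendreCoeff_id_mul hf, legendreCoeff_id_mul hf]
  rcases m with _ | m
  · simp only [legendreJacobi_zero, Nat.add_sub_cancel]
    ring
  · simp only [Nat.add_sub_cancel, Nat.reduceSubDiff]
    ring

theorem IsRegularSolution.legendreCoeff_coeff_mul {r f : ℝ → ℝ} (hf : IsRegularSolution r f)
    (m : ℕ) : legendreCoeff (fun t => r t * f t) m = -((m : ℝ) * (m + 1)) * legendreCoeff f m := by
  have hrf : ContinuousOn (fun t => r t * f t) (Icc (-1) 1) :=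
    hf.continuousOn_coeff.mul hf.continuousOn
  have hmf : ContinuousOn (fun t => -((m : ℝ) * (m + 1)) * f t) (Icc (-1) 1) :=
    continuousOn_const.mul hf.continuousOn
  rw [← sub_eq_zero, ← legendreCoeff_const_mul, ← legendreCoeff_sub hrf hmf]
  simpa only [legendreCoeff, sub_mul, mul_assoc] using
    hf.integral_sub_mul_mul_eq_zero (isRegularSolution_legendreBar m)

theorem legendreCoeff_legendreBar_of_ne {m n : ℕ} (hmn : m ≠ n) :
    legendreCoeff (legendreBar m) n = 0 := by
  have heigen := (isRegularSolution_legendreBar m).legendreCoeff_coeff_mul n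
  rw [legendreCoeff_const_mul] at heigen
  have hne : ((n : ℝ) - m) * (n + m + 1) ≠ 0 :=
    mul_ne_zero (sub_ne_zero.2 (Nat.cast_injective.ne hmn.symm)) (by positivity)
  exact (mul_eq_zero.1 (by linear_combination heigen)).resolve_left hne

theorem legendreCoeff_legendreBar_self (m : ℕ) : legendreCoeff (legendreBar m) m = 1 := by
  induction m with
  | zero =>
    simp only [legendreCoeff, legendreBar_eq_legendreScale_mul, legendreP, mul_one, ← sq,
      legendreScale_sq]
    norm_num
  | succ m ih =>
    have hcont (k : ℕ) : ContinuousOn (legendreBar k) (Icc (-1) 1) :=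
      (continuous_legendreBar k).continuousOn
    have hsymm : legendreCoeff (fun t => t * legendreBar (m + 1) t) m =
        legendreCoeff (fun t => t * legendreBar m t) (m + 1) := by
      simp only [legendreCoeff, mul_right_comm]
    rw [legendreCoeff_id_mul (hcont _), legendreCoeff_id_mul (hcont _), Nat.add_sub_cancel, ih,
      legendreCoeff_legendreBar_of_ne (by lia : m + 1 ≠ m - 1),
      legendreCoeff_legendreBar_of_ne (by lia : m ≠ m + 1 + 1)] at hsymm
    exact mul_left_cancel₀ (legendreJacobi_succ_pos m).ne' (by linear_combination hsymm)

theorem integral_legendreBar_mul_legendreBar (m n : ℕ) :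
    ∫ t in (-1 : ℝ)..1, legendreBar m t * legendreBar n t = if m = n then 1 else 0 := by
  split_ifs with h
  · exact h ▸ legendreCoeff_legendreBar_self m
  · exact legendreCoeff_legendreBar_of_ne h

theorem hasSum_legendreCoeff_sq {f : ℝ → ℝ} (hf : ContinuousOn f (Icc (-1) 1)) :
    HasSum (fun m => legendreCoeff f m ^ 2) (∫ t in (-1 : ℝ)..1, f t ^ 2) := by
  simpa only [legendreCoeff, eval_normalizedLegendre] using
    hasSum_sq_intervalIntegral_mul_sequence (S := normalizedLegendre) (by norm_num)
      (by simpa only [eval_normalizedLegendre] using integral_legendreBar_mul_legendreBar) hf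

theorem legendreCoeff_eq_zero_of_odd {f : ℝ → ℝ} (hf : ∀ x ∈ Ioo (-1 : ℝ) 1, f (-x) = f x) {m : ℕ}
    (hm : Odd m) : legendreCoeff f m = 0 := by
  have hreflect : legendreCoeff f m = -legendreCoeff f m := by
    calc
      legendreCoeff f m = ∫ t in (-1 : ℝ)..1, f (-t) * legendreBar m (-t) := by
        rw [intervalIntegral.integral_comp_neg fun t => f t * legendreBar m t, neg_neg,
          legendreCoeff]
      _ = ∫ t in (-1 : ℝ)..1, -(f t * legendreBar m t) :=
        intervalIntegral.integral_congr_Ioo_of_le (by norm_num) fun t ht => by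
          simp [hf t ht, legendreBar_neg, hm.neg_one_pow]
      _ = -legendreCoeff f m := intervalIntegral.integral_neg
  linarith

theorem hasSum_legendreCoeff_two_mul_sq {f : ℝ → ℝ} (hf : ContinuousOn f (Icc (-1) 1))
    (heven : ∀ x ∈ Ioo (-1 : ℝ) 1, f (-x) = f x) :
    HasSum (fun k => legendreCoeff f (2 * k) ^ 2) (∫ t in (-1 : ℝ)..1, f t ^ 2) := by
  refine ((mul_right_injective₀ two_ne_zero).hasSum_iff fun m hm => ?_).2
    (hasSum_legendreCoeff_sq hf)
  have hodd : Odd m := Nat.not_even_iff_odd.1 fun ⟨k, hk⟩ => hm ⟨k, (two_mul k).trans hk.symm⟩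
  rw [legendreCoeff_eq_zero_of_odd heven hodd, zero_pow two_ne_zero]

theorem IsRegularSolution.legendreCoeff_recurrence {γ χ : ℝ} {f : ℝ → ℝ}
    (hf : IsRegularSolution (fun x => γ * x ^ 2 - χ) f) (m : ℕ) :
    legendreJacobi (m + 1) * legendreJacobi (m + 2) * γ * legendreCoeff f (m + 2) +
      (m * (m + 1) + (legendreJacobi m ^ 2 + legendreJacobi (m + 1) ^ 2) * γ - χ) *
        legendreCoeff f m +
      legendreJacobi (m - 1) * legendreJacobi m * γ * legendreCoeff f (m - 2) = 0 := by
  have heigen := hf.legendreCoeff_coeff_mul m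
  have hγ : ContinuousOn (fun t => γ * (t ^ 2 * f t)) (Icc (-1) 1) :=
    continuousOn_const.mul ((continuousOn_pow 2).mul hf.continuousOn)
  have hχ : ContinuousOn (fun t => χ * f t) (Icc (-1) 1) := continuousOn_const.mul hf.continuousOn
  simp only [sub_mul, mul_assoc γ] at heigen
  rw [legendreCoeff_sub hγ hχ, legendreCoeff_const_mul, legendreCoeff_const_mul,
    legendreCoeff_sq_mul hf.continuousOn] at heigen
  linear_combination heigen

/-! ### Prolate spheroidal wave functions -/

namespace IsPSWF

variable {c χ : ℝ} {n : ℕ} {ψ : ℝ → ℝ} {lam : ℂ}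

theorem isRegularSolution (h : IsPSWF c n ψ χ lam) :
    IsRegularSolution (fun x => c ^ 2 * x ^ 2 - χ) ψ := by
  obtain ⟨hcont, hdiff, hode, -⟩ := h
  refine ⟨by fun_prop, hcont, fun x hx => (hdiff x hx).1, fun x hx => ?_⟩
  have hweight : HasDerivAt (fun y : ℝ => 1 - y ^ 2) (-(2 * x)) x := by
    simpa using (hasDerivAt_pow 2 x).const_sub 1
  exact (hweight.mul (hdiff x hx).2.hasDerivAt).congr_deriv (by linarith [hode x hx])

theorem comp_neg_of_even (h : IsPSWF c n ψ χ lam) (hn : Even n) :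
    ∀ x ∈ Ioo (-1 : ℝ) 1, ψ (-x) = ψ x := by
  have ⟨_, _, _, hfin, hcard, _⟩ := h
  exact h.isRegularSolution.eq_comp_neg_of_even_ncard (fun x => by ring) hfin (hcard ▸ hn)

theorem hasSum_legendreCoeff_two_mul_sq (h : IsPSWF c n ψ χ lam) (hn : Even n) :
    HasSum (fun k => legendreCoeff ψ (2 * k) ^ 2) 1 := by
  have hparseval :=
    _root_.hasSum_legendreCoeff_two_mul_sq h.isRegularSolution.continuousOn (h.comp_neg_of_even hn)
  obtain ⟨-, -, -, -, -, hnorm, -⟩ := h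
  rwa [hnorm] at hparseval

end IsPSWF

theorem stmt19 (c : ℝ) (hc : 0 < c) (n : ℕ) (hn : 0 < n) (hev : Even n)
    (ψ : ℝ → ℝ) (χ : ℝ) (lam : ℂ)
    (hpswf : IsPSWF c n ψ χ lam)
    (a cs bs : ℕ → ℝ)
    (ha : ∀ k : ℕ, 1 ≤ k → a k = ∫ t in (-1 : ℝ)..1, ψ t * legendreBar (2 * (k - 1)) t)
    (hcs : ∀ k : ℕ, 1 ≤ k →
      cs k = 2 * (k : ℝ) * (2 * (k : ℝ) - 1) /
          ((4 * (k : ℝ) - 1) * Real.sqrt ((4 * (k : ℝ) - 3) * (4 * (k : ℝ) + 1))) * c ^ 2)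
    (hbs : ∀ k : ℕ, 1 ≤ k →
      bs k = 2 * ((k : ℝ) - 1) * (2 * (k : ℝ) - 1) +
          (2 * (2 * (k : ℝ) - 1) * (2 * (k : ℝ) - 2) - 1) /
            ((4 * (k : ℝ) - 1) * (4 * (k : ℝ) - 5)) * c ^ 2 - χ) :
    cs 1 * a 2 + bs 1 * a 1 = 0 ∧
    (∀ k : ℕ, 1 ≤ k → cs (k + 1) * a (k + 2) + bs (k + 1) * a (k + 1) + cs k * a k = 0) ∧
    ∑' k : ℕ, a (k + 1) ^ 2 = 1 := by
  have hcoeff (j : ℕ) : a (j + 1) = legendreCoeff ψ (2 * j) := ha (j + 1) (by lia)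
  have hoff (j : ℕ) :
      cs (j + 1) = legendreJacobi (2 * j + 1) * legendreJacobi (2 * j + 2) * c ^ 2 := by
    rw [hcs _ (by lia), legendreJacobi_mul_legendreJacobi_succ]
    push_cast
    ring_nf
  have hdiag (j : ℕ) : bs (j + 1) = (2 * j : ℕ) * ((2 * j : ℕ) + 1) +
      (legendreJacobi (2 * j) ^ 2 + legendreJacobi (2 * j + 1) ^ 2) * c ^ 2 - χ := by
    rw [hbs _ (by lia), legendreJacobi_sq_add_sq_succ]
    push_cast
    ring_nf
  have hrec := hpswf.isRegularSolution.legendreCoeff_recurrence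
  refine ⟨?_, fun k hk => ?_, ?_⟩
  · rw [hoff 0, hdiag 0, hcoeff 0, hcoeff 1]
    simpa [legendreJacobi_zero] using hrec 0
  · obtain ⟨j, rfl⟩ := Nat.exists_eq_add_of_le' hk
    rw [hoff, hoff, hdiag, hcoeff, hcoeff, hcoeff]
    exact hrec (2 * (j + 1))
  · simp only [hcoeff]
    exact (hpswf.hasSum_legendreCoeff_two_mul_sq hev).tsum_eq
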